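/- Fix A ∈ ℛ. Let X ≥ 0 be a random vector in ℝ^d with distribution F and E‖X‖ < ∞, let c, c* ∈ ℝ^d satisfy c* ≥ c > 0 componentwise, and assume Θ := ∫₀^∞ ℙ(X ≥ v·c) dv > 0 and Θ* := ∫₀^∞ ℙ(X ≥ v·c*) dv > 0. Let F_{I,A} and F*_{I,A} be the integrated-tail distributions formed with c and with c*, respectively. If F_{I,A} is subexponential, then F*_{I,A} is subexponential; if F_{I,A} is long-tailed, then F*_{I,A} is long-tailed. -/

import Mathlib

open MeasureTheory ProbabilityTheory Filter Set Topology
open scoped Pointwise ENNReal NNReal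

/-- A set `A ⊆ ℝ^d` is increasing if `a ∈ A` and `y ≥ 0` imply `a + y ∈ A`. -/
def IncreasingSet {d : ℕ} (A : Set (Fin d → ℝ)) : Prop :=
  ∀ a ∈ A, ∀ y : Fin d → ℝ, 0 ≤ y → a + y ∈ A

/-- The family `ℛ` of proper open increasing subsets of `ℝ^d` with convex complement
whose closure does not contain the origin. -/
def MemR {d : ℕ} (A : Set (Fin d → ℝ)) : Prop :=
  A ≠ Set.univ ∧ IsOpen A ∧ IncreasingSet A ∧ Convex ℝ Aᶜ ∧ (0 : Fin d → ℝ) ∉ closure A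

/-- The translate `A + w = {a + w : a ∈ A}`. -/
def shiftSet {d : ℕ} (A : Set (Fin d → ℝ)) (w : Fin d → ℝ) : Set (Fin d → ℝ) :=
  (fun a => a + w) '' A

/-- The tail `V̄(x) = V((x,∞))` of a measure on `ℝ`, as a real number. -/
noncomputable def tailR (V : Measure ℝ) (x : ℝ) : ℝ := (V (Set.Ioi x)).toReal

/-- A probability distribution on `ℝ` is long-tailed if its tail is everywhere positive and
`V̄(x-y)/V̄(x) → 1` as `x → ∞`, for every `y > 0`. -/
def IsLongTailed (V : Measure ℝ) : Prop :=
  (∀ x : ℝ, 0 < V (Set.Ioi x)) ∧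
    ∀ y : ℝ, 0 < y → Tendsto (fun x => tailR V (x - y) / tailR V x) atTop (nhds 1)

/-- The (additive) convolution of two measures on `ℝ`. -/
noncomputable def convAdd (μ ν : Measure ℝ) : Measure ℝ :=
  (μ.prod ν).map (fun p => p.1 + p.2)

/-- A probability distribution on `ℝ` is subexponential if it is supported on `[0,∞)`, its tail
is everywhere positive, and `(V∗V)((x,∞))/V̄(x) → 2` as `x → ∞`. -/
def IsSubexponential (V : Measure ℝ) : Prop :=
  V (Set.Iio 0) = 0 ∧ (∀ x : ℝ, 0 < V (Set.Ioi x)) ∧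
    Tendsto (fun x => (convAdd V V (Set.Ioi x)).toReal / tailR V x) atTop (nhds 2)

/-- A probability distribution on `ℝ` is dominatedly varying if its tail is everywhere positive
and `limsup_{x→∞} V̄(bx)/V̄(x) < ∞` for every `b ∈ (0,1)`. -/
def IsDomVarying (V : Measure ℝ) : Prop :=
  (∀ x : ℝ, 0 < V (Set.Ioi x)) ∧
    ∀ b : ℝ, b ∈ Set.Ioo (0 : ℝ) 1 →
      IsBoundedUnder (· ≤ ·) atTop (fun x => tailR V (b * x) / tailR V x)

/-- `Y_A(z) = sup{u > 0 : z ∈ u·A}` (with `sup ∅ = 0`). -/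
noncomputable def YofA {d : ℕ} (A : Set (Fin d → ℝ)) (z : Fin d → ℝ) : ℝ :=
  sSup {u : ℝ | 0 < u ∧ z ∈ u • A}

/-- `V` is the integrated-tail distribution `F_{I,A}` of the claim vector `X` (with law `F`
under `P`), formed with the vector `c` and normalizing constant `Θ`: it is a probability
measure on `ℝ` whose tail is `min(1, H(x)/Θ)` for `x > 0`, where
`H(x) = ∫₀^∞ ℙ(X ∈ x·A + v·c) dv`, and equals `1` for `x ≤ 0`. -/
def IsIntegratedTail {d : ℕ} {Ω : Type*} [MeasurableSpace Ω] (P : Measure Ω)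
    (X : Ω → Fin d → ℝ) (A : Set (Fin d → ℝ)) (c : Fin d → ℝ) (Θ : ℝ)
    (V : Measure ℝ) : Prop :=
  IsProbabilityMeasure V ∧
    (∀ x : ℝ, 0 < x →
      tailR V x =
        min 1 ((∫ v in Set.Ioi (0 : ℝ), (P (X ⁻¹' shiftSet (x • A) (v • c))).toReal) / Θ)) ∧
    (∀ x : ℝ, x ≤ 0 → V (Set.Ioi x) = 1)

/-!
Put `H(x) = ∫₀^∞ ℙ(X ∈ x·A + v·c) dv`, so that eventually `F̄_{I,A}(x) = H(x)/Θ`. By Fubini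
`H(x) = 𝔼 φ(x, X)`, where `φ(x, z)` is the length of the set of `v > 0` with `z - v·c ∈ x·A`.

* If `c' ≤ K·c`, then `φ` formed with `c` is at most `K` times `φ` formed with `c'`. Hence the
  integrated tails formed with two positive vectors are of the same order.
* Since `A` is increasing with convex complement, `φ` is sublinear in `(x, z)`. Hence `H` is convex.

For a convex tail `W̄` one has `W̄(x - t) - W̄(x) ≤ (t/y) W̄(x - t - y)`. If `W̄` has the order of a
long-tailed tail, the right side is at most `(t/y) M W̄(x)` with `M` independent of `y`; letting
`y → ∞` shows that `W` is long-tailed. Subexponentiality passes to long-tailed distributions whose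
tail has the same order (Klüppelberg): up to terms governed by long-tailedness, `W∗W((x,∞))` is the
`W ⊗ W`-probability that both summands exceed `h`, which is comparable with the same probability
for `V ⊗ V`, and the latter is `o(V̄(x))` as `x → ∞` and then `h → ∞`.
-/

section Tail

variable {V W : Measure ℝ} {x : ℝ}

lemma tailR_nonneg (V : Measure ℝ) (x : ℝ) : 0 ≤ tailR V x := ENNReal.toReal_nonneg

lemma tailR_pos_iff [IsFiniteMeasure V] : 0 < tailR V x ↔ 0 < V (Ioi x) :=
  ENNReal.toReal_pos_iff.trans (and_iff_left (measure_lt_top V _))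

lemma antitone_tailR (V : Measure ℝ) [IsFiniteMeasure V] : Antitone (tailR V) :=
  fun _ _ hxy => measureReal_mono (Ioi_subset_Ioi hxy)

lemma tendsto_tailR_atTop (V : Measure ℝ) [IsFiniteMeasure V] :
    Tendsto (tailR V) atTop (𝓝 0) := by
  have h_lim : Tendsto (fun x => V (Ioi x)) atTop (𝓝 (V (⋂ x : ℝ, Ioi x))) :=
    tendsto_measure_iInter_atTop (fun _ => measurableSet_Ioi.nullMeasurableSet)
      (fun _ _ => Ioi_subset_Ioi) ⟨0, measure_ne_top V _⟩
  have h_inter : (⋂ x : ℝ, Ioi x) = ∅ :=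
    eq_empty_of_forall_notMem fun x hx => lt_irrefl x (mem_iInter.1 hx x)
  rw [h_inter, measure_empty] at h_lim
  exact (ENNReal.tendsto_toReal ENNReal.zero_ne_top).comp h_lim

lemma measureReal_Iic_eq_one_sub_tailR (V : Measure ℝ) [IsProbabilityMeasure V] (x : ℝ) :
    V.real (Iic x) = 1 - tailR V x := by
  rw [← compl_Ioi]
  exact probReal_compl_eq_one_sub measurableSet_Ioi

lemma tailR_pos_of_isBigO [IsFiniteMeasure W] (hV : ∀ x, 0 < tailR V x)
    (hVW : tailR V =O[atTop] tailR W) (x : ℝ) : 0 < tailR W x := by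
  obtain ⟨C, hC⟩ := hVW.bound
  obtain ⟨u, hxu, hu⟩ := ((eventually_ge_atTop x).and hC).exists
  refine lt_of_lt_of_le ((tailR_nonneg W u).lt_of_ne' fun hWu => ?_) (antitone_tailR W hxu)
  rw [hWu, norm_zero, mul_zero] at hu
  exact (norm_pos_iff.2 (hV u).ne').not_ge hu

lemma exists_forall_ge_tailR_le_mul (h : tailR V =O[atTop] tailR W) :
    ∃ C > 0, ∃ x₀, ∀ x ≥ x₀, tailR V x ≤ C * tailR W x := by
  obtain ⟨C, hC, hVW⟩ := h.exists_pos
  obtain ⟨x₀, hx₀⟩ := eventually_atTop.1 hVW.bound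
  refine ⟨C, hC, x₀, fun x hx => ?_⟩
  simpa only [Real.norm_of_nonneg (tailR_nonneg _ x)] using hx₀ x hx

end Tail

section Convolution

variable {V W : Measure ℝ} {x y h : ℝ}

lemma convAdd_Ioi (V W : Measure ℝ) (x : ℝ) :
    convAdd V W (Ioi x) = (V.prod W) {p | x < p.1 + p.2} :=
  Measure.map_apply (by fun_prop) measurableSet_Ioi

lemma ae_nonneg_prod [SFinite W] (hV : V (Iio 0) = 0) (hW : W (Iio 0) = 0) :
    ∀ᵐ p ∂V.prod W, 0 ≤ p.1 ∧ 0 ≤ p.2 := by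
  have ae_nonneg {U : Measure ℝ} (hU : U (Iio 0) = 0) : ∀ᵐ u ∂U, 0 ≤ u :=
    (measure_eq_zero_iff_ae_notMem.1 hU).mono fun _ => notMem_Iio.1
  exact (Measure.quasiMeasurePreserving_fst.ae (ae_nonneg hV)).and
    (Measure.quasiMeasurePreserving_snd.ae (ae_nonneg hW))

/-- The event that both summands exceed `h` and their sum exceeds `x`: the part of `{sum > x}`
whose probability is `o(V̄(x))` for subexponential `V`, as `x → ∞` and then `h → ∞`. -/
def jointExceedance (h x : ℝ) : Set (ℝ × ℝ) := {p | h < p.1 ∧ h < p.2 ∧ x < p.1 + p.2}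

lemma measurableSet_jointExceedance (h x : ℝ) : MeasurableSet (jointExceedance h x) :=
  (measurableSet_lt measurable_const measurable_fst).inter
    ((measurableSet_lt measurable_const measurable_snd).inter
      (measurableSet_lt measurable_const (measurable_fst.add measurable_snd)))

lemma swap_preimage_jointExceedance (h x : ℝ) :
    Prod.swap ⁻¹' jointExceedance h x = jointExceedance h x := by
  ext p
  simp only [jointExceedance, mem_preimage, mem_ofPred_eq, Prod.fst_swap, Prod.snd_swap,
    add_comm p.2, and_left_comm]

lemma prod_comm_jointExceedance (V W : Measure ℝ) [SFinite V] [SFinite W] (h x : ℝ) :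
    (V.prod W) (jointExceedance h x) = (W.prod V) (jointExceedance h x) := by
  rw [← Measure.prod_swap, Measure.map_apply measurable_swap (measurableSet_jointExceedance h x),
    swap_preimage_jointExceedance]

lemma mk_preimage_jointExceedance_of_lt {u : ℝ} (hu : h < u) :
    Prod.mk u ⁻¹' jointExceedance h x = Ioi (max h (x - u)) := by
  ext v
  simp only [jointExceedance, mem_preimage, mem_ofPred_eq, mem_Ioi, max_lt_iff,
    sub_lt_iff_lt_add', hu, true_and]

lemma mk_preimage_jointExceedance_of_le {u : ℝ} (hu : u ≤ h) :
    Prod.mk u ⁻¹' jointExceedance h x = ∅ :=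
  eq_empty_of_forall_notMem fun _ hv => hu.not_gt hv.1

lemma prod_jointExceedance_le_mul (U : Measure ℝ) [SFinite V] [SFinite W] {C : ℝ≥0∞}
    (hWV : ∀ t ≥ h, W (Ioi t) ≤ C * V (Ioi t)) :
    (U.prod W) (jointExceedance h x) ≤ C * (U.prod V) (jointExceedance h x) := by
  have hm := measurableSet_jointExceedance h x
  rw [Measure.prod_apply hm, Measure.prod_apply hm,
    ← lintegral_const_mul _ (measurable_measure_prodMk_left hm)]
  refine lintegral_mono fun u => ?_
  rcases lt_or_ge h u with hu | hu
  · simpa only [mk_preimage_jointExceedance_of_lt hu] using hWV _ (le_max_left _ _)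
  · simp only [mk_preimage_jointExceedance_of_le hu, measure_empty, zero_le]

lemma prod_self_jointExceedance_le_mul [IsFiniteMeasure V] [IsFiniteMeasure W] {C : ℝ}
    (hC : 0 ≤ C) (hWV : ∀ t ≥ h, tailR W t ≤ C * tailR V t) :
    (W.prod W).real (jointExceedance h x) ≤ C ^ 2 * (V.prod V).real (jointExceedance h x) := by
  have hWV' : ∀ t ≥ h, W (Ioi t) ≤ ENNReal.ofReal C * V (Ioi t) := fun t ht => by
    rw [← ofReal_measureReal (μ := W), ← ofReal_measureReal (μ := V), ← ENNReal.ofReal_mul hC]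
    exact ENNReal.ofReal_le_ofReal (hWV t ht)
  have h_le : (W.prod W) (jointExceedance h x) ≤
      ENNReal.ofReal (C ^ 2) * (V.prod V) (jointExceedance h x) :=
    calc (W.prod W) (jointExceedance h x)
      _ ≤ ENNReal.ofReal C * (W.prod V) (jointExceedance h x) :=
        prod_jointExceedance_le_mul W hWV'
      _ = ENNReal.ofReal C * (V.prod W) (jointExceedance h x) := by
        rw [prod_comm_jointExceedance]
      _ ≤ ENNReal.ofReal C * (ENNReal.ofReal C * (V.prod V) (jointExceedance h x)) := by
        gcongr
        exact prod_jointExceedance_le_mul V hWV'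
      _ = ENNReal.ofReal (C ^ 2) * (V.prod V) (jointExceedance h x) := by
        rw [← mul_assoc, ← pow_two, ENNReal.ofReal_pow hC]
  calc (W.prod W).real (jointExceedance h x)
    _ ≤ (ENNReal.ofReal (C ^ 2) * (V.prod V) (jointExceedance h x)).toReal :=
      ENNReal.toReal_mono (by finiteness) h_le
    _ = C ^ 2 * (V.prod V).real (jointExceedance h x) := by
      rw [ENNReal.toReal_mul, ENNReal.toReal_ofReal (by positivity), Measure.real]

lemma measureReal_add_add_le_of_ae {α : Type*} [MeasurableSpace α] {μ : Measure α}
    [IsFiniteMeasure μ] {s t u r : Set α} (ht : MeasurableSet t) (hu : MeasurableSet u)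
    (hst : Disjoint s t) (hsu : Disjoint s u) (htu : Disjoint t u)
    (hs_r : ∀ᵐ a ∂μ, a ∈ s → a ∈ r) (ht_r : ∀ᵐ a ∂μ, a ∈ t → a ∈ r)
    (hu_r : ∀ᵐ a ∂μ, a ∈ u → a ∈ r) :
    μ.real s + μ.real t + μ.real u ≤ μ.real r := by
  rw [← measureReal_union hst ht, ← measureReal_union (hsu.union_left htu) hu]
  refine ENNReal.toReal_mono (measure_ne_top μ r) (measure_mono_ae ?_)
  filter_upwards [hs_r, ht_r, hu_r] with a hs ht hu ha
  rcases ha with (ha | ha) | ha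
  exacts [hs ha, ht ha, hu ha]

lemma add_add_le_convAdd_Ioi [IsProbabilityMeasure V] (hV : V (Iio 0) = 0) (hyx : y ≤ x) :
    tailR V x + (1 - tailR V y) * tailR V x + (tailR V y - tailR V x) * tailR V (x - y) ≤
      (convAdd V V (Ioi x)).toReal := by
  have h_first : (V.prod V).real (Ioi x ×ˢ univ) = tailR V x := by
    rw [measureReal_prod_prod, probReal_univ, mul_one]; rfl
  have h_second : (V.prod V).real (Iic y ×ˢ Ioi x) = (1 - tailR V y) * tailR V x := by
    rw [measureReal_prod_prod, measureReal_Iic_eq_one_sub_tailR]; rfl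
  have h_both : (V.prod V).real (Ioc y x ×ˢ Ioi (x - y)) =
      (tailR V y - tailR V x) * tailR V (x - y) := by
    rw [measureReal_prod_prod, ← Ioi_sdiff_Ioi,
      measureReal_sdiff (Ioi_subset_Ioi hyx) measurableSet_Ioi]
    rfl
  rw [convAdd_Ioi, ← h_both, ← h_second]
  nth_rw 1 [← h_first]
  have h_nonneg := ae_nonneg_prod hV hV
  refine measureReal_add_add_le_of_ae (measurableSet_Iic.prod measurableSet_Ioi)
    (measurableSet_Ioc.prod measurableSet_Ioi)
    (disjoint_prod.2 <| .inl <| disjoint_left.2 fun _ hu huy => (hyx.trans_lt hu).not_ge huy)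
    (disjoint_prod.2 <| .inl <| disjoint_left.2 fun _ hu huy => not_lt.2 huy.2 hu)
    (disjoint_prod.2 <| .inl <| disjoint_left.2 fun _ hu huy => not_lt.2 hu huy.1)
    ?_ ?_ ?_
  all_goals
    filter_upwards [h_nonneg] with p hp hmem
    simp only [mem_prod, mem_Ioi, mem_Iic, mem_Ioc, mem_univ] at hmem ⊢
    linarith

lemma two_sub_mul_le_convAdd_Ioi [IsProbabilityMeasure V] (hV : V (Iio 0) = 0) (x : ℝ) :
    (2 - tailR V x) * tailR V x ≤ (convAdd V V (Ioi x)).toReal := by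
  have := add_add_le_convAdd_Ioi hV (le_refl x)
  linarith

lemma add_jointExceedance_le_convAdd_Ioi [IsProbabilityMeasure V] (hV : V (Iio 0) = 0)
    (hhx : h ≤ x) :
    2 * (1 - tailR V h) * tailR V x + (V.prod V).real (jointExceedance h x) ≤
      (convAdd V V (Ioi x)).toReal := by
  have h_first : (V.prod V).real (Ioi x ×ˢ Iic h) = (1 - tailR V h) * tailR V x := by
    rw [measureReal_prod_prod, measureReal_Iic_eq_one_sub_tailR, mul_comm]; rfl
  have h_second : (V.prod V).real (Iic h ×ˢ Ioi x) = (1 - tailR V h) * tailR V x := by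
    rw [measureReal_prod_prod, measureReal_Iic_eq_one_sub_tailR]; rfl
  rw [convAdd_Ioi, mul_assoc, two_mul]
  nth_rw 1 [← h_first]
  rw [← h_second]
  have h_nonneg := ae_nonneg_prod hV hV
  refine measureReal_add_add_le_of_ae (measurableSet_Iic.prod measurableSet_Ioi)
    (measurableSet_jointExceedance h x)
    (disjoint_prod.2 <| .inl <| disjoint_left.2 fun _ hu huh => (hhx.trans_lt hu).not_ge huh)
    (disjoint_left.2 fun p hp hp' => hp'.2.1.not_ge hp.2)
    (disjoint_left.2 fun p hp hp' => hp'.1.not_ge hp.1)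
    ?_ ?_ ?_
  all_goals
    filter_upwards [h_nonneg] with p hp hmem
    simp only [jointExceedance, mem_prod, mem_Ioi, mem_Iic, mem_ofPred_eq] at hmem ⊢
    linarith

lemma convAdd_Ioi_le_add_jointExceedance (V : Measure ℝ) [IsProbabilityMeasure V] (h x : ℝ) :
    (convAdd V V (Ioi x)).toReal ≤
      2 * tailR V (x - h) + (V.prod V).real (jointExceedance h x) := by
  have h_first : (V.prod V).real (Ioi (x - h) ×ˢ univ) = tailR V (x - h) := by
    rw [measureReal_prod_prod, probReal_univ, mul_one]; rfl
  have h_second : (V.prod V).real (univ ×ˢ Ioi (x - h)) = tailR V (x - h) := by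
    rw [measureReal_prod_prod, probReal_univ, one_mul]; rfl
  have h_cover : {p : ℝ × ℝ | x < p.1 + p.2} ⊆
      Ioi (x - h) ×ˢ univ ∪ univ ×ˢ Ioi (x - h) ∪ jointExceedance h x := by
    intro p (hp : x < p.1 + p.2)
    rcases lt_or_ge h p.1 with h1 | h1
    · rcases lt_or_ge h p.2 with h2 | h2
      · exact .inr ⟨h1, h2, hp⟩
      · exact .inl (.inl ⟨show x - h < p.1 by linarith, mem_univ _⟩)
    · exact .inl (.inr ⟨mem_univ _, show x - h < p.2 by linarith⟩)
  calc (convAdd V V (Ioi x)).toReal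
    _ = (V.prod V).real {p | x < p.1 + p.2} := by rw [convAdd_Ioi, Measure.real]
    _ ≤ (V.prod V).real (Ioi (x - h) ×ˢ univ) + (V.prod V).real (univ ×ˢ Ioi (x - h)) +
        (V.prod V).real (jointExceedance h x) :=
      (measureReal_mono h_cover).trans <| (measureReal_union_le _ _).trans <| by
        gcongr
        exact measureReal_union_le _ _
    _ = 2 * tailR V (x - h) + (V.prod V).real (jointExceedance h x) := by
      rw [h_first, h_second, two_mul]

end Convolution

section LongTailed

variable {V W : Measure ℝ}

lemma IsLongTailed.tailR_pos [IsFiniteMeasure V] (hV : IsLongTailed V) (x : ℝ) :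
    0 < tailR V x :=
  tailR_pos_iff.2 (hV.1 x)

lemma IsSubexponential.tailR_pos [IsFiniteMeasure V] (hV : IsSubexponential V) (x : ℝ) :
    0 < tailR V x :=
  tailR_pos_iff.2 (hV.2.1 x)

lemma one_le_tailR_sub_div_tailR [IsFiniteMeasure V] {x y : ℝ} (hV : 0 < tailR V x)
    (hy : 0 ≤ y) : 1 ≤ tailR V (x - y) / tailR V x :=
  (one_le_div hV).2 (antitone_tailR V (sub_le_self x hy))

theorem IsSubexponential.isLongTailed [IsProbabilityMeasure V] (hV : IsSubexponential V) :
    IsLongTailed V := by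
  refine ⟨hV.2.1, fun y hy => ?_⟩
  have hpos := hV.tailR_pos
  have h_upper : Tendsto (fun x => ((convAdd V V (Ioi x)).toReal / tailR V x -
      (2 - tailR V y)) / (tailR V y - tailR V x)) atTop (𝓝 1) := by
    have h_lim := (hV.2.2.sub_const (2 - tailR V y)).div
      ((tendsto_tailR_atTop V).const_sub (tailR V y)) (by simpa using (hpos y).ne')
    rwa [sub_sub_cancel, sub_zero, div_self (hpos y).ne'] at h_lim
  refine tendsto_of_tendsto_of_tendsto_of_le_of_le' tendsto_const_nhds h_upper
    (.of_forall fun x => one_le_tailR_sub_div_tailR (hpos x) hy.le) ?_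
  filter_upwards [(tendsto_tailR_atTop V).eventually_lt_const (hpos y), eventually_ge_atTop y]
    with x hxy hyx
  have h_conv := add_add_le_convAdd_Ioi hV.1 hyx
  rw [le_div_iff₀ (sub_pos.2 hxy), le_sub_iff_add_le, le_div_iff₀ (hpos x), add_mul,
    mul_right_comm, div_mul_cancel₀ _ (hpos x).ne']
  linarith

lemma IsLongTailed.exists_eventually_tailR_sub_le_mul [IsFiniteMeasure V] (hV : IsLongTailed V)
    (hVW : tailR V =Θ[atTop] tailR W) :
    ∃ M, ∀ s > 0, ∀ᶠ x in atTop, tailR W (x - s) ≤ M * tailR W x := by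
  obtain ⟨B, hB, u, hWV⟩ := exists_forall_ge_tailR_le_mul hVW.2
  obtain ⟨C, -, v, hVW⟩ := exists_forall_ge_tailR_le_mul hVW.1
  refine ⟨B * (2 * C), fun s hs => ?_⟩
  filter_upwards [(hV.2 s hs).eventually_le_const one_lt_two, eventually_ge_atTop (u + s),
    eventually_ge_atTop v] with x hx hux hvx
  calc tailR W (x - s)
    _ ≤ B * tailR V (x - s) := hWV _ (le_sub_iff_add_le.2 hux)
    _ ≤ B * (2 * tailR V x) := by
      gcongr
      exact (div_le_iff₀ (hV.tailR_pos x)).1 hx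
    _ ≤ B * (2 * (C * tailR W x)) := by
      gcongr
      exact hVW x hvx
    _ = B * (2 * C) * tailR W x := by ring

lemma sub_le_div_mul_of_convexOn {f : ℝ → ℝ} {s : Set ℝ} (hf : ConvexOn ℝ s f) {x t y : ℝ}
    (hx : x ∈ s) (hxty : x - (t + y) ∈ s) (hfx : 0 ≤ f (x - t)) (ht : 0 < t) (hy : 0 < y) :
    f (x - t) - f x ≤ t / y * f (x - (t + y)) := by
  have h_slope := hf.slope_mono_adjacent hxty hx (y := x - t) (by linarith) (by linarith)
  rw [show x - t - (x - (t + y)) = y by ring, sub_sub_cancel, div_le_div_iff₀ hy ht] at h_slope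
  rw [div_mul_eq_mul_div, le_div_iff₀ hy]
  linarith [mul_nonneg hfx ht.le]

lemma isLongTailed_of_convexOn [IsFiniteMeasure W] (hW : ∀ x, 0 < tailR W x) {x₀ M : ℝ}
    (hconv : ConvexOn ℝ (Ici x₀) (tailR W))
    (hWM : ∀ s > 0, ∀ᶠ x in atTop, tailR W (x - s) ≤ M * tailR W x) :
    IsLongTailed W := by
  refine ⟨fun x => tailR_pos_iff.1 (hW x), fun t ht => tendsto_order.2 ⟨fun a ha => ?_,
    fun a ha => ?_⟩⟩
  · exact .of_forall fun x => ha.trans_le (one_le_tailR_sub_div_tailR (hW x) ht.le)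
  · obtain ⟨y, hy, hya⟩ : ∃ y > 0, t / y * M < a - 1 := by
      have h_lim : Tendsto (fun y => t / y * M) atTop (𝓝 0) := by
        simpa only [zero_mul, id] using (tendsto_id.const_div_atTop t).mul_const M
      exact ((eventually_gt_atTop 0).and
        (h_lim.eventually_lt_const (sub_pos.2 ha))).exists
    filter_upwards [hWM (t + y) (by positivity), eventually_ge_atTop (x₀ + (t + y))]
      with x hxM hx
    rw [div_lt_iff₀ (hW x)]
    calc tailR W (x - t)
      _ ≤ tailR W x + t / y * tailR W (x - (t + y)) := by
        rw [← sub_le_iff_le_add']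
        exact sub_le_div_mul_of_convexOn hconv (mem_Ici.2 (by linarith)) (mem_Ici.2 (by linarith))
          (tailR_nonneg W _) ht hy
      _ ≤ tailR W x + t / y * (M * tailR W x) := by gcongr
      _ = (1 + t / y * M) * tailR W x := by ring
      _ < a * tailR W x := by
        gcongr
        · exact hW x
        · linarith

theorem IsLongTailed.of_isTheta_of_convexOn [IsFiniteMeasure V] [IsFiniteMeasure W]
    (hV : IsLongTailed V) (hVW : tailR V =Θ[atTop] tailR W) {x₀ : ℝ}
    (hconv : ConvexOn ℝ (Ici x₀) (tailR W)) : IsLongTailed W := by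
  obtain ⟨M, hWM⟩ := hV.exists_eventually_tailR_sub_le_mul hVW
  exact isLongTailed_of_convexOn (tailR_pos_of_isBigO hV.tailR_pos hVW.1) hconv hWM

end LongTailed

section Subexponential

variable {V W : Measure ℝ}

lemma convAdd_Ioi_div_tailR_le [IsProbabilityMeasure V] [IsProbabilityMeasure W]
    (hV : V (Iio 0) = 0) {B C h x : ℝ} (hB : 0 ≤ B) (hVx : 0 < tailR V x) (hWx : 0 < tailR W x)
    (hhx : h ≤ x) (hWV : ∀ t ≥ h, tailR W t ≤ B * tailR V t) (hVW : tailR V x ≤ C * tailR W x) :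
    (convAdd W W (Ioi x)).toReal / tailR W x ≤ 2 * (tailR W (x - h) / tailR W x) +
      B ^ 2 * C * ((convAdd V V (Ioi x)).toReal / tailR V x - 2 * (1 - tailR V h)) := by
  set J := (V.prod V).real (jointExceedance h x)
  have hJV : J / tailR V x ≤ (convAdd V V (Ioi x)).toReal / tailR V x - 2 * (1 - tailR V h) := by
    rw [div_le_iff₀ hVx, sub_mul, div_mul_cancel₀ _ hVx.ne']
    exact le_sub_iff_add_le'.2 (add_jointExceedance_le_convAdd_Ioi hV hhx)
  have hJW : J / tailR W x ≤ C * (J / tailR V x) := by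
    rw [← mul_div_assoc, div_le_div_iff₀ hWx hVx, mul_comm C, mul_assoc]
    exact mul_le_mul_of_nonneg_left hVW measureReal_nonneg
  calc (convAdd W W (Ioi x)).toReal / tailR W x
    _ ≤ (2 * tailR W (x - h) + B ^ 2 * J) / tailR W x := by
      gcongr
      exact (convAdd_Ioi_le_add_jointExceedance W h x).trans
        (add_le_add_right (prod_self_jointExceedance_le_mul hB hWV) _)
    _ = 2 * (tailR W (x - h) / tailR W x) + B ^ 2 * (J / tailR W x) := by
      rw [add_div, mul_div_assoc, mul_div_assoc]
    _ ≤ 2 * (tailR W (x - h) / tailR W x) + B ^ 2 * (C * (J / tailR V x)) := by gcongr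
    _ ≤ 2 * (tailR W (x - h) / tailR W x) +
        B ^ 2 * (C * ((convAdd V V (Ioi x)).toReal / tailR V x - 2 * (1 - tailR V h))) := by
      gcongr
      exact (pos_of_mul_pos_left (hVx.trans_le hVW) hWx.le).le
    _ = _ := by rw [mul_assoc]

lemma eventually_lt_convAdd_Ioi_div_tailR [IsProbabilityMeasure V] (hV : V (Iio 0) = 0)
    (hpos : ∀ x, 0 < tailR V x) {a : ℝ} (ha : a < 2) :
    ∀ᶠ x in atTop, a < (convAdd V V (Ioi x)).toReal / tailR V x := by
  filter_upwards [(tendsto_tailR_atTop V).eventually_lt_const (sub_pos.2 ha)] with x hx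
  calc a
    _ < 2 - tailR V x := lt_sub_comm.1 hx
    _ ≤ (convAdd V V (Ioi x)).toReal / tailR V x :=
      (le_div_iff₀ (hpos x)).2 (two_sub_mul_le_convAdd_Ioi hV x)

theorem IsSubexponential.of_isTheta [IsProbabilityMeasure V] [IsProbabilityMeasure W]
    (hV : IsSubexponential V) (hVW : tailR V =Θ[atTop] tailR W) (hW : IsLongTailed W)
    (hW₀ : W (Iio 0) = 0) : IsSubexponential W := by
  refine ⟨hW₀, hW.1, tendsto_order.2
    ⟨fun a ha => eventually_lt_convAdd_Ioi_div_tailR hW₀ hW.tailR_pos ha, fun a ha => ?_⟩⟩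
  obtain ⟨B, hB, u, hWV⟩ := exists_forall_ge_tailR_le_mul hVW.2
  obtain ⟨C, -, v, hVW⟩ := exists_forall_ge_tailR_le_mul hVW.1
  obtain ⟨h, hah, h_pos, huh⟩ :
      ∃ h, 2 + B ^ 2 * C * (2 * tailR V h) < a ∧ 0 < h ∧ u ≤ h := by
    have h_lim : Tendsto (fun h => 2 + B ^ 2 * C * (2 * tailR V h)) atTop (𝓝 2) := by
      simpa only [mul_zero, add_zero] using
        (((tendsto_tailR_atTop V).const_mul 2).const_mul (B ^ 2 * C)).const_add 2
    exact ((h_lim.eventually_lt_const ha).and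
      ((eventually_gt_atTop 0).and (eventually_ge_atTop u))).exists
  have h_bound : Tendsto (fun x => 2 * (tailR W (x - h) / tailR W x) +
      B ^ 2 * C * ((convAdd V V (Ioi x)).toReal / tailR V x - 2 * (1 - tailR V h))) atTop
      (𝓝 (2 * 1 + B ^ 2 * C * (2 - 2 * (1 - tailR V h)))) :=
    ((hW.2 h h_pos).const_mul 2).add ((hV.2.2.sub_const _).const_mul _)
  filter_upwards [h_bound.eventually_lt_const (u := a) (by linarith), eventually_ge_atTop h,
    eventually_ge_atTop v] with x hxa hhx hvx
  exact (convAdd_Ioi_div_tailR_le hV.1 hB.le (hV.tailR_pos x) (hW.tailR_pos x) hhx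
    (fun t ht => hWV t (huh.trans ht)) (hVW x hvx)).trans_lt hxa

end Subexponential

section Sojourn

variable {E : Type*} [AddCommGroup E] [Module ℝ E] {A : Set E} {c c' z w : E} {x y v K : ℝ}

/-- The length of the set of times `v > 0` at which the moving point `z - v • c` lies in `x • A`.
Its mean over the claim vector `z = X` is the function `H(x)` defining the integrated tail. -/
noncomputable def sojourn (A : Set E) (c : E) (x : ℝ) (z : E) : ℝ≥0∞ :=
  volume {v : ℝ | 0 < v ∧ z - v • c ∈ x • A}

lemma restrict_prodMk_preimage_eq_sojourn {Ω : Type*} (A : Set E) (c : E) (x : ℝ) (X : Ω → E)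
    (ω : Ω) :
    volume.restrict (Ioi 0) (Prod.mk ω ⁻¹' {p : Ω × ℝ | X p.1 - p.2 • c ∈ x • A}) =
      sojourn A c x (X ω) := by
  rw [Measure.restrict_apply' measurableSet_Ioi, inter_comm]
  rfl

lemma volume_le_ofReal_mul_of_forall_inv_mul_mem {S T : Set ℝ} (hK : 0 < K)
    (hST : ∀ v ∈ S, K⁻¹ * v ∈ T) : volume S ≤ ENNReal.ofReal K * volume T :=
  calc volume S
    _ ≤ volume ((K⁻¹ * ·) ⁻¹' T) := measure_mono hST
    _ = ENNReal.ofReal K * volume T := by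
      rw [Real.volume_preimage_mul_left (inv_ne_zero hK.ne'), inv_inv, abs_of_pos hK]

lemma sojourn_smul_le (hK : 0 < K) :
    sojourn A c (K * x) (K • z) ≤ ENNReal.ofReal K * sojourn A c x z := by
  refine volume_le_ofReal_mul_of_forall_inv_mul_mem hK fun v ⟨hv, hvA⟩ => ⟨by positivity, ?_⟩
  rw [mul_smul, mem_smul_set_iff_inv_smul_mem₀ hK.ne', smul_sub, inv_smul_smul₀ hK.ne',
    smul_smul] at hvA
  exact hvA

lemma add_notMem_add_smul (hA : Convex ℝ Aᶜ) (hx : 0 < x) (hy : 0 < y) (hz : z ∉ x • A)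
    (hw : w ∉ y • A) : z + w ∉ (x + y) • A := by
  have mem_smul_compl {t : ℝ} (ht : 0 < t) (a : E) : a ∈ t • Aᶜ ↔ a ∉ t • A := by
    rw [mem_smul_set_iff_inv_smul_mem₀ ht.ne', mem_smul_set_iff_inv_smul_mem₀ ht.ne',
      mem_compl_iff]
  rw [← mem_smul_compl (add_pos hx hy), hA.add_smul hx.le hy.le]
  exact add_mem_add ((mem_smul_compl hx z).2 hz) ((mem_smul_compl hy w).2 hw)

section Order

variable [PartialOrder E] [IsOrderedModule ℝ E]

lemma isUpperSet_smul_of_pos (hA : IsUpperSet A) (hx : 0 < x) : IsUpperSet (x • A) := by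
  intro z w hzw hz
  rw [mem_smul_set_iff_inv_smul_mem₀ hx.ne'] at hz ⊢
  exact hA (smul_le_smul_of_nonneg_left hzw (inv_nonneg.2 hx.le)) hz

variable [IsOrderedAddMonoid E]

lemma sojourn_le_mul (hA : IsUpperSet A) (hx : 0 < x) (hK : 0 < K) (hc : c' ≤ K • c) (z : E) :
    sojourn A c x z ≤ ENNReal.ofReal K * sojourn A c' x z := by
  refine volume_le_ofReal_mul_of_forall_inv_mul_mem hK fun v ⟨hv, hvA⟩ => ⟨by positivity, ?_⟩
  refine isUpperSet_smul_of_pos hA hx (sub_le_sub_left ?_ z) hvA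
  calc (K⁻¹ * v) • c'
    _ ≤ (K⁻¹ * v) • K • c := smul_le_smul_of_nonneg_left hc (by positivity)
    _ = v • c := by rw [smul_smul, mul_right_comm, inv_mul_cancel₀ hK.ne', one_mul]

lemma sojourn_le_ofReal (hA : IsUpperSet A) (hc : 0 ≤ c) (hx : 0 < x)
    (hv : z - v • c ∉ x • A) : sojourn A c x z ≤ ENNReal.ofReal v := by
  have h_subset : {u : ℝ | 0 < u ∧ z - u • c ∈ x • A} ⊆ Ioc 0 v := fun u ⟨hu, huA⟩ =>
    ⟨hu, le_of_not_gt fun hvu => hv <| isUpperSet_smul_of_pos hA hx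
      (sub_le_sub_left (smul_le_smul_of_nonneg_right hvu.le hc) z) huA⟩
  simpa only [sojourn, Real.volume_Ioc, sub_zero] using measure_mono (μ := volume) h_subset

lemma ofReal_le_sojourn (hA : IsUpperSet A) (hc : 0 ≤ c) (hx : 0 < x)
    (hv : z - v • c ∈ x • A) : ENNReal.ofReal v ≤ sojourn A c x z := by
  have h_subset : Ioc 0 v ⊆ {u : ℝ | 0 < u ∧ z - u • c ∈ x • A} := fun u hu =>
    ⟨hu.1, isUpperSet_smul_of_pos hA hx
      (sub_le_sub_left (smul_le_smul_of_nonneg_right hu.2 hc) z) hv⟩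
  simpa only [sojourn, Real.volume_Ioc, sub_zero] using measure_mono (μ := volume) h_subset

lemma sub_smul_notMem_of_sojourn_lt (hA : IsUpperSet A) (hc : 0 ≤ c) (hx : 0 < x) {v : ℝ≥0}
    (hv : sojourn A c x z < v) : z - (v : ℝ) • c ∉ x • A := fun hvA =>
  hv.not_ge <| (ENNReal.ofReal_coe_nnreal (p := v)).symm.trans_le (ofReal_le_sojourn hA hc hx hvA)

lemma sojourn_add_le (hA : IsUpperSet A) (hA' : Convex ℝ Aᶜ) (hc : 0 ≤ c) (hx : 0 < x)
    (hy : 0 < y) (z w : E) :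
    sojourn A c (x + y) (z + w) ≤ sojourn A c x z + sojourn A c y w := by
  refine ENNReal.le_of_forall_pos_le_add fun ε hε h_fin => ?_
  obtain ⟨h_fin_z, h_fin_w⟩ := ENNReal.add_lt_top.1 h_fin
  set u := (sojourn A c x z).toNNReal + ε / 2 with hu
  set v := (sojourn A c y w).toNNReal + ε / 2 with hv
  have hzu : sojourn A c x z < u := by
    rw [hu, ENNReal.coe_add, ENNReal.coe_toNNReal h_fin_z.ne]
    exact ENNReal.lt_add_right h_fin_z.ne (ENNReal.coe_pos.2 (half_pos hε)).ne'
  have hwv : sojourn A c y w < v := by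
    rw [hv, ENNReal.coe_add, ENNReal.coe_toNNReal h_fin_w.ne]
    exact ENNReal.lt_add_right h_fin_w.ne (ENNReal.coe_pos.2 (half_pos hε)).ne'
  have h_exit : z + w - ((u + v : ℝ≥0) : ℝ) • c ∉ (x + y) • A := by
    rw [NNReal.coe_add, add_smul, add_sub_add_comm]
    exact add_notMem_add_smul hA' hx hy (sub_smul_notMem_of_sojourn_lt hA hc hx hzu)
      (sub_smul_notMem_of_sojourn_lt hA hc hy hwv)
  calc sojourn A c (x + y) (z + w)
    _ ≤ ((u + v : ℝ≥0) : ℝ≥0∞) := by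
      simpa only [ENNReal.ofReal_coe_nnreal] using
        sojourn_le_ofReal hA hc (add_pos hx hy) h_exit
    _ = sojourn A c x z + sojourn A c y w + ε := by
      rw [hu, hv, add_add_add_comm, add_halves, ENNReal.coe_add, ENNReal.coe_add,
        ENNReal.coe_toNNReal h_fin_z.ne, ENNReal.coe_toNNReal h_fin_w.ne]

lemma convexOn_sojourn (hA : IsUpperSet A) (hA' : Convex ℝ Aᶜ) (hc : 0 ≤ c) (z : E) :
    ConvexOn ℝ≥0 (Ioi 0) (fun x => sojourn A c x z) := by
  refine convexOn_iff_forall_pos.2 ⟨convex_Ioi 0, fun x hx y hy a b ha hb hab => ?_⟩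
  have h_split : z = (a : ℝ) • z + (b : ℝ) • z := by
    rw [← add_smul, ← NNReal.coe_add, hab, NNReal.coe_one, one_smul]
  calc sojourn A c (a • x + b • y) z
    _ = sojourn A c (a * x + b * y) ((a : ℝ) • z + (b : ℝ) • z) := by
      rw [← h_split]; rfl
    _ ≤ sojourn A c (a * x) ((a : ℝ) • z) + sojourn A c (b * y) ((b : ℝ) • z) :=
      sojourn_add_le hA hA' hc (mul_pos ha hx) (mul_pos hb hy) _ _
    _ ≤ ENNReal.ofReal a * sojourn A c x z + ENNReal.ofReal b * sojourn A c y z :=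
      add_le_add (sojourn_smul_le ha) (sojourn_smul_le hb)
    _ = a • sojourn A c x z + b • sojourn A c y z := by
      rw [ENNReal.ofReal_coe_nnreal, ENNReal.ofReal_coe_nnreal]; rfl

end Order

end Sojourn

section MeanSojourn

variable {Ω E : Type*} [MeasurableSpace Ω] [AddCommGroup E] [Module ℝ E] {P : Measure Ω}
  {X : Ω → E} {A : Set E} {c c' : E} {x : ℝ}

/-- The function `H(x) = ∫₀^∞ ℙ(X ∈ x·A + v·c) dv`, encoded as the mean of the sojourn length so
that no integrability is needed to manipulate it. -/
noncomputable def meanSojourn (P : Measure Ω) (X : Ω → E) (A : Set E) (c : E) (x : ℝ) : ℝ≥0∞ :=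
  ∫⁻ ω, sojourn A c x (X ω) ∂P

section Order

variable [PartialOrder E] [IsOrderedModule ℝ E] [IsOrderedAddMonoid E]

lemma meanSojourn_le_mul {K : ℝ} (hA : IsUpperSet A) (hx : 0 < x) (hK : 0 < K) (hc : c' ≤ K • c) :
    meanSojourn P X A c x ≤ ENNReal.ofReal K * meanSojourn P X A c' x := by
  rw [meanSojourn, meanSojourn, ← lintegral_const_mul' _ _ ENNReal.ofReal_ne_top]
  exact lintegral_mono fun ω => sojourn_le_mul hA hx hK hc (X ω)

lemma toReal_meanSojourn_isBigO (hA : IsUpperSet A) {K K' : ℝ} (hK : 0 < K) (hc : c' ≤ K • c)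
    (hK' : 0 < K') (hc' : c ≤ K' • c') :
    (fun x => (meanSojourn P X A c x).toReal) =O[atTop]
      fun x => (meanSojourn P X A c' x).toReal := by
  refine Asymptotics.IsBigO.of_bound K ?_
  filter_upwards [eventually_gt_atTop 0] with x hx
  rw [Real.norm_of_nonneg ENNReal.toReal_nonneg, Real.norm_of_nonneg ENNReal.toReal_nonneg]
  have h_le : meanSojourn P X A c x ≤ ENNReal.ofReal K * meanSojourn P X A c' x :=
    meanSojourn_le_mul hA hx hK hc
  have h_ge : meanSojourn P X A c' x ≤ ENNReal.ofReal K' * meanSojourn P X A c x :=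
    meanSojourn_le_mul hA hx hK' hc'
  rcases eq_or_ne (meanSojourn P X A c x) ⊤ with h_top | h_fin
  · rw [h_top, ENNReal.toReal_top]
    positivity
  · have h_fin' : meanSojourn P X A c' x ≠ ⊤ :=
      ne_top_of_le_ne_top (ENNReal.mul_ne_top ENNReal.ofReal_ne_top h_fin) h_ge
    simpa only [ENNReal.toReal_mul, ENNReal.toReal_ofReal hK.le] using
      ENNReal.toReal_mono (ENNReal.mul_ne_top ENNReal.ofReal_ne_top h_fin') h_le

end Order

lemma convexOn_toReal {F : Type*} [AddCommMonoid F] [Module ℝ F] {s : Set F} {f : F → ℝ≥0∞}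
    (hf : ConvexOn ℝ≥0 s f) (hfs : ∀ a ∈ s, f a ≠ ⊤) : ConvexOn ℝ s fun a => (f a).toReal := by
  refine ⟨fun a ha b hb r t hr ht hrt => ?_, fun a ha b hb r t hr ht hrt => ?_⟩ <;>
    lift r to ℝ≥0 using hr <;> lift t to ℝ≥0 using ht <;> norm_cast at hrt
  · exact hf.1 ha hb zero_le zero_le hrt
  · have h_le : f (r • a + t • b) ≤ r * f a + t * f b := hf.2 ha hb zero_le zero_le hrt
    have h_ra := ENNReal.mul_ne_top (ENNReal.coe_ne_top (r := r)) (hfs a ha)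
    have h_tb := ENNReal.mul_ne_top (ENNReal.coe_ne_top (r := t)) (hfs b hb)
    simpa only [ENNReal.toReal_add h_ra h_tb, ENNReal.toReal_mul, ENNReal.coe_toReal,
      NNReal.smul_def, smul_eq_mul] using
      ENNReal.toReal_mono (ENNReal.add_ne_top.2 ⟨h_ra, h_tb⟩) h_le

variable [MeasurableSpace E] [MeasurableSub₂ E] [MeasurableSMul ℝ E]

lemma measurableSet_sub_smul_mem_smul (hA : MeasurableSet A) (hX : Measurable X) (hx : x ≠ 0) :
    MeasurableSet {p : Ω × ℝ | X p.1 - p.2 • c ∈ x • A} :=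
  ((hX.comp measurable_fst).sub (measurable_snd.smul_const c)) (hA.const_smul_of_ne_zero hx)

lemma measurable_sojourn_comp (hA : MeasurableSet A) (hX : Measurable X) (hx : x ≠ 0) :
    Measurable fun ω => sojourn A c x (X ω) := by
  simpa only [restrict_prodMk_preimage_eq_sojourn] using
    measurable_measure_prodMk_left (ν := volume.restrict (Ioi (0 : ℝ)))
      (measurableSet_sub_smul_mem_smul hA hX hx)

lemma convexOn_meanSojourn [PartialOrder E] [IsOrderedModule ℝ E] [IsOrderedAddMonoid E]
    (hA : IsUpperSet A) (hA' : Convex ℝ Aᶜ) (hAm : MeasurableSet A) (hX : Measurable X)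
    (hc : 0 ≤ c) : ConvexOn ℝ≥0 (Ioi 0) (meanSojourn P X A c) := by
  refine ⟨convex_Ioi 0, fun x hx y hy a b ha hb hab => ?_⟩
  calc meanSojourn P X A c (a • x + b • y)
    _ ≤ ∫⁻ ω, a * sojourn A c x (X ω) + b * sojourn A c y (X ω) ∂P :=
      lintegral_mono fun ω => (convexOn_sojourn hA hA' hc (X ω)).2 hx hy ha hb hab
    _ = a * meanSojourn P X A c x + b * meanSojourn P X A c y := by
      rw [lintegral_add_left ((measurable_sojourn_comp hAm hX hx.ne').const_mul _),
        lintegral_const_mul' _ _ ENNReal.coe_ne_top, lintegral_const_mul' _ _ ENNReal.coe_ne_top]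
      rfl

lemma integral_measure_sub_smul_mem_smul [IsFiniteMeasure P] (hA : MeasurableSet A)
    (hX : Measurable X) (hx : x ≠ 0) :
    ∫ v in Ioi (0 : ℝ), (P {ω | X ω - v • c ∈ x • A}).toReal = (meanSojourn P X A c x).toReal := by
  have hm := measurableSet_sub_smul_mem_smul (c := c) hA hX hx
  calc ∫ v in Ioi (0 : ℝ), (P {ω | X ω - v • c ∈ x • A}).toReal
    _ = (∫⁻ v in Ioi (0 : ℝ), P {ω | X ω - v • c ∈ x • A}).toReal :=
      integral_toReal (measurable_measure_prodMk_right hm).aemeasurable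
        (.of_forall fun _ => measure_lt_top P _)
    _ = (P.prod (volume.restrict (Ioi 0)) {p : Ω × ℝ | X p.1 - p.2 • c ∈ x • A}).toReal := by
      rw [Measure.prod_apply_symm hm]; rfl
    _ = (meanSojourn P X A c x).toReal := by
      simp only [Measure.prod_apply hm, restrict_prodMk_preimage_eq_sojourn, meanSojourn]

end MeanSojourn

section IntegratedTail

variable {d : ℕ} {Ω : Type*} [MeasurableSpace Ω] {P : Measure Ω} {X : Ω → Fin d → ℝ}
  {A : Set (Fin d → ℝ)} {c c' : Fin d → ℝ} {Θ Θ' : ℝ} {V V' : Measure ℝ}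

lemma IncreasingSet.isUpperSet (hA : IncreasingSet A) : IsUpperSet A := fun a b hab ha => by
  simpa only [add_sub_cancel] using hA a ha (b - a) (sub_nonneg.2 hab)

lemma preimage_shiftSet {α : Type*} (f : α → Fin d → ℝ) (A : Set (Fin d → ℝ)) (w : Fin d → ℝ) :
    f ⁻¹' shiftSet A w = {a | f a - w ∈ A} := by
  rw [shiftSet, image_add_right]
  simp only [preimage_preimage, ← sub_eq_add_neg]
  rfl

lemma exists_pos_le_smul (hc : ∀ j, 0 < c j) (c' : Fin d → ℝ) : ∃ K : ℝ, 0 < K ∧ c' ≤ K • c := by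
  obtain ⟨K, hK⟩ := (Set.finite_range fun j => c' j / c j).bddAbove
  refine ⟨max K 1, lt_max_of_lt_right one_pos, fun j => ?_⟩
  exact (div_le_iff₀ (hc j)).1 ((hK (mem_range_self j)).trans (le_max_left K 1))

lemma IsIntegratedTail.tailR_eventuallyEq [IsFiniteMeasure P] (hA : MeasurableSet A)
    (hX : Measurable X) (hV : IsIntegratedTail P X A c Θ V) :
    tailR V =ᶠ[atTop] fun x => Θ⁻¹ * (meanSojourn P X A c x).toReal := by
  have := hV.1
  filter_upwards [eventually_gt_atTop 0, (tendsto_tailR_atTop V).eventually_lt_const one_pos]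
    with x hx hVx
  have h_tail : tailR V x = min 1 ((meanSojourn P X A c x).toReal / Θ) := by
    simpa only [preimage_shiftSet, integral_measure_sub_smul_mem_smul hA hX hx.ne'] using
      hV.2.1 x hx
  rw [h_tail, min_lt_iff] at hVx
  rw [h_tail, min_eq_right (hVx.resolve_left (lt_irrefl 1)).le, div_eq_inv_mul]

lemma IsIntegratedTail.measure_Iio_zero (hV : IsIntegratedTail P X A c Θ V) : V (Iio 0) = 0 := by
  have := hV.1
  have h_Iic : V (Ioi 0)ᶜ = 0 := (prob_compl_eq_zero_iff measurableSet_Ioi).2 (hV.2.2 0 le_rfl)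
  rw [compl_Ioi] at h_Iic
  exact measure_mono_null Iio_subset_Iic_self h_Iic

lemma IsIntegratedTail.tailR_isBigO [IsFiniteMeasure P] (hA : IncreasingSet A)
    (hAm : MeasurableSet A) (hX : Measurable X) (hc : ∀ j, 0 < c j) (hc' : ∀ j, 0 < c' j)
    (hΘ' : Θ' ≠ 0) (hV : IsIntegratedTail P X A c Θ V)
    (hV' : IsIntegratedTail P X A c' Θ' V') : tailR V =O[atTop] tailR V' := by
  obtain ⟨K, hK, hcK⟩ := exists_pos_le_smul hc c'
  obtain ⟨K', hK', hcK'⟩ := exists_pos_le_smul hc' c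
  calc tailR V
    _ =ᶠ[atTop] fun x => Θ⁻¹ * (meanSojourn P X A c x).toReal :=
      hV.tailR_eventuallyEq hAm hX
    _ =O[atTop] fun x => (meanSojourn P X A c' x).toReal :=
      (toReal_meanSojourn_isBigO hA.isUpperSet hK hcK hK' hcK').const_mul_left _
    _ =O[atTop] fun x => Θ'⁻¹ * (meanSojourn P X A c' x).toReal :=
      Asymptotics.isBigO_self_const_mul (inv_ne_zero hΘ') _ _
    _ =ᶠ[atTop] tailR V' := (hV'.tailR_eventuallyEq hAm hX).symm

lemma IsIntegratedTail.exists_convexOn_tailR [IsFiniteMeasure P] (hA : IncreasingSet A)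
    (hA' : Convex ℝ Aᶜ) (hAm : MeasurableSet A) (hX : Measurable X) (hc : 0 ≤ c)
    (hΘ : 0 ≤ Θ) (hV : IsIntegratedTail P X A c Θ V) (hpos : ∀ x, 0 < tailR V x) :
    ∃ x₀, ConvexOn ℝ (Ici x₀) (tailR V) := by
  obtain ⟨x₀, hx₀⟩ := eventually_atTop.1
    ((hV.tailR_eventuallyEq hAm hX).and (eventually_gt_atTop 0))
  have h_fin : ∀ x ∈ Ici x₀, meanSojourn P X A c x ≠ ⊤ := fun x hx h_top => by
    have h_tail : tailR V x = Θ⁻¹ * (meanSojourn P X A c x).toReal := (hx₀ x hx).1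
    rw [h_top, ENNReal.toReal_top, mul_zero] at h_tail
    exact (hpos x).ne' h_tail
  have h_conv : ConvexOn ℝ (Ici x₀) fun x => (meanSojourn P X A c x).toReal :=
    convexOn_toReal ((convexOn_meanSojourn hA.isUpperSet hA' hAm hX hc).subset
      (fun x hx => (hx₀ x hx).2) (convex_Ici x₀)) h_fin
  exact ⟨x₀, (h_conv.smul (inv_nonneg.2 hΘ)).congr fun x hx => (hx₀ x hx).1.symm⟩

end IntegratedTail

theorem integrated_tail_class_transfer_general
    {d : ℕ} {Ω : Type*} [MeasurableSpace Ω] (P : Measure Ω) [IsFiniteMeasure P]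
    (A : Set (Fin d → ℝ)) (hA : IncreasingSet A) (hA' : Convex ℝ Aᶜ) (hAm : MeasurableSet A)
    (X : Ω → Fin d → ℝ) (hX : Measurable X)
    (c cstar : Fin d → ℝ) (hc : ∀ j, 0 < c j) (hcstar : ∀ j, 0 < cstar j)
    (hΘpos : 0 < ∫ v in Set.Ioi (0 : ℝ), (P {ω | v • c ≤ X ω}).toReal)
    (hΘstarpos : 0 < ∫ v in Set.Ioi (0 : ℝ), (P {ω | v • cstar ≤ X ω}).toReal)
    (FIA FIAstar : Measure ℝ)
    (hFIA : IsIntegratedTail P X A c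
      (∫ v in Set.Ioi (0 : ℝ), (P {ω | v • c ≤ X ω}).toReal) FIA)
    (hFIAstar : IsIntegratedTail P X A cstar
      (∫ v in Set.Ioi (0 : ℝ), (P {ω | v • cstar ≤ X ω}).toReal) FIAstar) :
    (IsSubexponential FIA → IsSubexponential FIAstar) ∧
      (IsLongTailed FIA → IsLongTailed FIAstar) := by
  have := hFIA.1
  have := hFIAstar.1
  have h_theta : tailR FIA =Θ[atTop] tailR FIAstar :=
    ⟨hFIA.tailR_isBigO hA hAm hX hc hcstar hΘstarpos.ne' hFIAstar,
      hFIAstar.tailR_isBigO hA hAm hX hcstar hc hΘpos.ne' hFIA⟩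
  have h_long : IsLongTailed FIA → IsLongTailed FIAstar := fun hL => by
    obtain ⟨x₀, h_conv⟩ := hFIAstar.exists_convexOn_tailR hA hA' hAm hX
      (fun j => (hcstar j).le) hΘstarpos.le (tailR_pos_of_isBigO hL.tailR_pos h_theta.1)
    exact hL.of_isTheta_of_convexOn h_theta h_conv
  exact ⟨fun hS => hS.of_isTheta h_theta (h_long hS.isLongTailed) hFIAstar.measure_Iio_zero,
    h_long⟩

/-- **Remark 3.3.** Fix `A ∈ ℛ`. For `c* ≥ c > 0` componentwise and `Θ, Θ* > 0`: if the
integrated-tail distribution `F_{I,A}` (formed with `c`) is subexponential (resp. long-tailed),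
then `F*_{I,A}` (formed with `c*`) is subexponential (resp. long-tailed). -/
theorem integrated_tail_class_transfer
    {d : ℕ} {Ω : Type*} [MeasurableSpace Ω] (P : Measure Ω) [IsProbabilityMeasure P]
    (A : Set (Fin d → ℝ)) (hA : MemR A)
    (X : Ω → Fin d → ℝ) (hXmeas : Measurable X)
    (hXnonneg : ∀ ω, 0 ≤ X ω) (hXint : Integrable X P)
    (c cstar : Fin d → ℝ) (hc : ∀ j, 0 < c j) (hccstar : c ≤ cstar)
    (Θ Θstar : ℝ)
    (hΘ : Θ = ∫ v in Set.Ioi (0 : ℝ), (P {ω | v • c ≤ X ω}).toReal) (hΘpos : 0 < Θ)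
    (hΘstar : Θstar = ∫ v in Set.Ioi (0 : ℝ), (P {ω | v • cstar ≤ X ω}).toReal)
    (hΘstarpos : 0 < Θstar)
    (FIA FIAstar : Measure ℝ)
    (hFIA : IsIntegratedTail P X A c Θ FIA)
    (hFIAstar : IsIntegratedTail P X A cstar Θstar FIAstar) :
    (IsSubexponential FIA → IsSubexponential FIAstar) ∧
      (IsLongTailed FIA → IsLongTailed FIAstar) := by
  subst hΘ hΘstar
  exact integrated_tail_class_transfer_general P A hA.2.2.1 hA.2.2.2.1 hA.2.1.measurableSet X hXmeas
    c cstar hc (fun j => (hc j).trans_le (hccstar j)) hΘpos hΘstarpos FIA FIAstar hFIA hFIAstar
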